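/- Let k be a positive integer and let p be the smallest prime that does not divide k. Then φ(p·k) = φ((p−1)·k); in particular, n = (p−1)·k is a solution of φ(n) = φ(n+k), so for every positive integer k the equation φ(n) = φ(n+k) has at least one solution. -/

import Mathlib

/-!
If `p` is the smallest prime not dividing `k`, then every prime factor of `p - 1` divides `k`, so
the factor `p - 1` introduces no new prime and `φ((p - 1) * k) = (p - 1) * φ(k)`. As `p` is coprime
to `k`, this is also `φ(p) * φ(k) = φ(p * k)`.
-/

theorem totient_mul_of_primeFactors_subset {m k : ℕ} (h : m.primeFactors ⊆ k.primeFactors) :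
    Nat.totient (m * k) = m * Nat.totient k := by
  rcases eq_or_ne m 0 with rfl | hm
  · simp
  rcases eq_or_ne k 0 with rfl | hk
  · simp
  have hmk : (m * k).primeFactors = k.primeFactors := by
    rw [Nat.primeFactors_mul hm hk, Finset.union_eq_right.mpr h]
  -- By Euler's product formula, `φ(n) / n` depends only on the prime factors of `n`.
  have hcast : (Nat.totient (m * k) : ℚ) = m * Nat.totient k := by
    rw [Nat.totient_eq_mul_prod_factors, Nat.totient_eq_mul_prod_factors, hmk, Nat.cast_mul,
      mul_assoc]
  exact_mod_cast hcast

theorem totient_prime_mul_eq_totient_sub_one_mul {k p : ℕ} (hp : p.Prime) (hpk : ¬ p ∣ k)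
    (h : (p - 1).primeFactors ⊆ k.primeFactors) :
    Nat.totient (p * k) = Nat.totient ((p - 1) * k) := by
  rw [Nat.totient_mul_of_prime_of_not_dvd hp hpk, totient_mul_of_primeFactors_subset h]

theorem totient_sub_one_mul_eq_totient_sub_one_mul_add {k p : ℕ} (hp : p.Prime) (hpk : ¬ p ∣ k)
    (h : (p - 1).primeFactors ⊆ k.primeFactors) :
    Nat.totient ((p - 1) * k) = Nat.totient ((p - 1) * k + k) := by
  rw [← Nat.succ_mul, Nat.succ_eq_add_one, Nat.sub_add_cancel hp.one_le,
    totient_prime_mul_eq_totient_sub_one_mul hp hpk h]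

theorem primeFactors_subset_of_lt_of_mem_lowerBounds {k m p : ℕ} (hk : k ≠ 0) (hmp : m < p)
    (hp : p ∈ lowerBounds {q : ℕ | q.Prime ∧ ¬ q ∣ k}) : m.primeFactors ⊆ k.primeFactors := by
  intro q hq
  have hq_prime : q.Prime := Nat.prime_of_mem_primeFactors hq
  have hqp : q < p := (Nat.le_of_mem_primeFactors hq).trans_lt hmp
  have hqk : q ∣ k := by
    by_contra hqk
    exact hqp.not_ge (hp ⟨hq_prime, hqk⟩)
  exact Nat.mem_primeFactors.mpr ⟨hq_prime, hqk, hk⟩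

theorem exists_isLeast_prime_not_dvd {k : ℕ} (hk : k ≠ 0) :
    ∃ p, IsLeast {q : ℕ | q.Prime ∧ ¬ q ∣ k} p := by
  obtain ⟨p, hkp, hp⟩ := Nat.exists_infinite_primes (k + 1)
  have hpk : ¬ p ∣ k := Nat.not_dvd_of_pos_of_lt (Nat.pos_of_ne_zero hk) hkp
  exact ⟨_, Nat.sInf_mem ⟨p, hp, hpk⟩, fun _ => Nat.sInf_le⟩

theorem exists_pos_totient_eq_totient_add {k : ℕ} (hk : k ≠ 0) :
    ∃ n : ℕ, 0 < n ∧ Nat.totient n = Nat.totient (n + k) := by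
  obtain ⟨p, ⟨hp, hpk⟩, hmin⟩ := exists_isLeast_prime_not_dvd hk
  have hsub : (p - 1).primeFactors ⊆ k.primeFactors :=
    primeFactors_subset_of_lt_of_mem_lowerBounds hk (Nat.sub_one_lt hp.ne_zero) hmin
  exact ⟨(p - 1) * k, Nat.mul_pos (Nat.sub_pos_of_lt hp.one_lt) (Nat.pos_of_ne_zero hk),
    totient_sub_one_mul_eq_totient_sub_one_mul_add hp hpk hsub⟩

/-- If `p` is the smallest prime not dividing `k`, then `φ(p·k) = φ((p-1)·k)`;
in particular `n = (p-1)·k` solves `φ(n) = φ(n+k)`, so for every positive `k`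
the equation `φ(n) = φ(n+k)` has at least one solution. -/
theorem stmt_16 (k p : ℕ) (hk : 0 < k)
    (hp : p.Prime) (hpk : ¬ p ∣ k)
    (hmin : ∀ q : ℕ, q.Prime → ¬ q ∣ k → p ≤ q) :
    Nat.totient (p * k) = Nat.totient ((p - 1) * k) ∧
      Nat.totient ((p - 1) * k) = Nat.totient ((p - 1) * k + k) ∧
      ∀ k' : ℕ, 0 < k' → ∃ n : ℕ, 0 < n ∧ Nat.totient n = Nat.totient (n + k') := by
  have hsub : (p - 1).primeFactors ⊆ k.primeFactors :=
    primeFactors_subset_of_lt_of_mem_lowerBounds hk.ne' (Nat.sub_one_lt hp.ne_zero)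
      fun q ⟨hq, hqk⟩ => hmin q hq hqk
  exact ⟨totient_prime_mul_eq_totient_sub_one_mul hp hpk hsub,
    totient_sub_one_mul_eq_totient_sub_one_mul_add hp hpk hsub,
    fun _ hk' => exists_pos_totient_eq_totient_add hk'.ne'⟩
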